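/- Let d ∈ ℕ with wcol_{2r}(G, ≤) ≤ d. Let D be the directed graph whose vertices are the distinct sequences first_i(v) for v ∈ V and 0 ≤ i ≤ d, with an arc from Y to X for every pair of distinct vertices X, Y of D such that X is the empty sequence or max X occurs as an entry of Y. Then every vertex of D has out-degree at most 1 + d² · 2^d. -/

import Mathlib

open SimpleGraph

variable {V : Type*}

/-- `u ∈ wreach G r v` iff `u` is weakly `r`-reachable from `v`:
there is a path of length at most `r` from `v` to `u` on which `u` is the `≤`-least vertex. -/
def wreach [LinearOrder V] (G : SimpleGraph V) (r : ℕ) (v : V) : Set V :=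
  {u | ∃ p : G.Walk v u, p.IsPath ∧ p.length ≤ r ∧ ∀ w ∈ p.support, u ≤ w}

/-- The weak `r`-coloring number of `(G, ≤)`: the maximum of `|wreach_r[v]|` over `v`. -/
noncomputable def wcol [LinearOrder V] (G : SimpleGraph V) (r : ℕ) : ℕ :=
  sSup (Set.range fun v => (wreach G r v).ncard)

/-- `firstSeq G r i v`: the sequence consisting of the `i` smallest elements of
`wreach G r v` in increasing order, padded at the end with `v` to have length exactly `i`. -/
noncomputable def firstSeq [Fintype V] [LinearOrder V] (G : SimpleGraph V) (r i : ℕ)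
    (v : V) : List V :=
  let l := ((Set.toFinite (wreach G r v)).toFinset.sort (· ≤ ·)).take i
  l ++ List.replicate (i - l.length) v

/-- The `≤`-greatest entry of a nonempty list (junk value on the empty list). -/
noncomputable def listMax [LinearOrder V] [Nonempty V] : List V → V
  | [] => Classical.arbitrary V
  | a :: as => as.foldr max a

/-!
If `u ≤ m` are both weakly `r`-reachable from `v`, walking from `m` to `v` and on to `u` shows
that `u` is weakly `2r`-reachable from `m`. Hence the entries of a nonempty `X = first_i(v)` form
a subset of `wreach_{2r}[m]`, where `m = max X`. This subset, `i` and `m` together determine `X`: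
its distinct entries are listed in increasing order, and if there is padding at all, then every
element of `wreach_r[v]` occurs in `X`, so that the padding vertex `v` is `m` itself. Counting the
triples (`m`, `i`, subset) with `m` an entry of `Y` gives the bound.
-/

theorem isGreatest_listMax [LinearOrder V] [Nonempty V] {l : List V} (hl : l ≠ []) :
    IsGreatest {x | x ∈ l} (listMax l) := by
  have max?_eq : l.max? = some (listMax l) := by
    cases l with
    | nil => exact absurd rfl hl
    | cons a as => rw [List.max?_cons', List.foldl_eq_foldr, listMax]
  exact List.max?_eq_some_iff.mp max?_eq

section WeakReachability

variable [LinearOrder V] {G : SimpleGraph V} {r s : ℕ} {u v m : V}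

theorem self_mem_wreach (G : SimpleGraph V) (r : ℕ) (v : V) : v ∈ wreach G r v :=
  ⟨Walk.nil, by simp, by simp, by simp⟩

theorem le_of_mem_wreach (hu : u ∈ wreach G r v) : u ≤ v := by
  obtain ⟨p, -, -, u_le⟩ := hu
  exact u_le v p.start_mem_support

theorem mem_wreach_of_walk (p : G.Walk v u) (hp : p.length ≤ r) (u_le : ∀ w ∈ p.support, u ≤ w) :
    u ∈ wreach G r v := by
  classical
  exact ⟨p.bypass, p.bypass_isPath, (Walk.length_bypass_le_length p).trans hp,
    fun w hw => u_le w (Walk.support_bypass_subset_support p hw)⟩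

theorem mem_wreach_add_of_le (hm : m ∈ wreach G r v) (hu : u ∈ wreach G s v) (hum : u ≤ m) :
    u ∈ wreach G (r + s) m := by
  obtain ⟨p, -, hp, m_le⟩ := hm
  obtain ⟨q, -, hq, u_le⟩ := hu
  refine mem_wreach_of_walk (p.reverse.append q) ?_ fun w hw => ?_
  · rw [Walk.length_append, Walk.length_reverse]
    exact Nat.add_le_add hp hq
  · rw [Walk.mem_support_append_iff, Walk.support_reverse, List.mem_reverse] at hw
    exact hw.elim (fun hwp => hum.trans (m_le w hwp)) (u_le w)

theorem ncard_wreach_le_wcol [Finite V] (G : SimpleGraph V) (r : ℕ) (v : V) :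
    (wreach G r v).ncard ≤ wcol G r :=
  le_csSup (Set.finite_range _).bddAbove ⟨v, rfl⟩

end WeakReachability

/-- The elements of `F` in increasing order, padded at the end with `m` to length at least `i`.
A first sequence is recovered in this form from its set of entries, its length and its maximum. -/
def paddedSort [LinearOrder V] (F : Finset V) (i : ℕ) (m : V) : List V :=
  F.sort (· ≤ ·) ++ List.replicate (i - F.card) m

theorem paddedSort_toFinset [LinearOrder V] {l : List V} (sorted : l.Pairwise (· ≤ ·))
    (nodup : l.Nodup) (i : ℕ) (m : V) :
    paddedSort l.toFinset i m = l ++ List.replicate (i - l.length) m := by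
  rw [paddedSort, (List.toFinset_sort (· ≤ ·) nodup).mpr sorted, List.toFinset_card_of_nodup nodup]

section FirstSequences

variable [Fintype V] [LinearOrder V]

/-- `wreach G r v` as a `Finset`, in the form in which it occurs in `firstSeq`. -/
noncomputable def wreachFinset (G : SimpleGraph V) (r : ℕ) (v : V) : Finset V :=
  (Set.toFinite (wreach G r v)).toFinset

theorem mem_wreachFinset {G : SimpleGraph V} {r : ℕ} {u v : V} :
    u ∈ wreachFinset G r v ↔ u ∈ wreach G r v :=
  Set.Finite.mem_toFinset _

theorem card_wreachFinset_le_wcol (G : SimpleGraph V) (r : ℕ) (v : V) :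
    (wreachFinset G r v).card ≤ wcol G r := by
  rw [wreachFinset, ← Set.ncard_eq_toFinset_card]
  exact ncard_wreach_le_wcol G r v

variable (G : SimpleGraph V) (r i : ℕ) (v : V)

theorem firstSeq_eq_append :
    firstSeq G r i v = ((wreachFinset G r v).sort (· ≤ ·)).take i ++
      List.replicate (i - (((wreachFinset G r v).sort (· ≤ ·)).take i).length) v :=
  rfl

theorem length_firstSeq : (firstSeq G r i v).length = i := by
  rw [firstSeq_eq_append, List.length_append, List.length_replicate, List.length_take]
  omega

variable {G r i v} in
theorem mem_wreach_of_mem_firstSeq {u : V} (hu : u ∈ firstSeq G r i v) : u ∈ wreach G r v := by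
  rw [firstSeq_eq_append] at hu
  rcases List.mem_append.mp hu with hu | hu
  · exact mem_wreachFinset.mp ((Finset.mem_sort _).mp (List.mem_of_mem_take hu))
  · exact List.eq_of_mem_replicate hu ▸ self_mem_wreach G r v

theorem toFinset_firstSeq :
    (firstSeq G r i v).toFinset = (((wreachFinset G r v).sort (· ≤ ·)).take i).toFinset := by
  rw [firstSeq_eq_append, List.toFinset_append, Finset.union_eq_left]
  intro u hu
  obtain ⟨padded, rfl⟩ := List.mem_replicate.mp (List.mem_toFinset.mp hu)
  have take_eq : ((wreachFinset G r u).sort (· ≤ ·)).take i =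
      (wreachFinset G r u).sort (· ≤ ·) := by
    refine List.take_of_length_le (le_of_not_ge fun h => padded ?_)
    rw [List.length_take_of_le h, Nat.sub_self]
  rw [take_eq, Finset.sort_toFinset, mem_wreachFinset]
  exact self_mem_wreach G r u

theorem paddedSort_toFinset_firstSeq :
    paddedSort (firstSeq G r i v).toFinset i v = firstSeq G r i v := by
  have take_sublist := List.take_sublist i ((wreachFinset G r v).sort (· ≤ ·))
  rw [toFinset_firstSeq]
  exact paddedSort_toFinset ((Finset.pairwise_sort _ _).sublist take_sublist)
    ((Finset.sort_nodup _ _).sublist take_sublist) i v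

variable [Nonempty V]

variable {G r i v} in
theorem listMax_firstSeq_of_mem (hv : v ∈ firstSeq G r i v) : listMax (firstSeq G r i v) = v :=
  (isGreatest_listMax (List.ne_nil_of_mem hv)).unique
    ⟨hv, fun _ hu => le_of_mem_wreach (mem_wreach_of_mem_firstSeq hu)⟩

theorem paddedSort_toFinset_firstSeq_listMax :
    paddedSort (firstSeq G r i v).toFinset i (listMax (firstSeq G r i v)) = firstSeq G r i v := by
  by_cases hv : v ∈ firstSeq G r i v
  · rw [listMax_firstSeq_of_mem hv, paddedSort_toFinset_firstSeq]
  · have no_padding : i - (firstSeq G r i v).toFinset.card = 0 := by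
      by_contra padded
      refine hv ?_
      rw [← paddedSort_toFinset_firstSeq]
      exact List.mem_append_right _ (List.mem_replicate.mpr ⟨padded, rfl⟩)
    conv_rhs => rw [← paddedSort_toFinset_firstSeq]
    simp only [paddedSort, no_padding, List.replicate_zero]

theorem toFinset_firstSeq_subset_wreachFinset_listMax :
    (firstSeq G r i v).toFinset ⊆ wreachFinset G (2 * r) (listMax (firstSeq G r i v)) := by
  intro u hu
  rw [List.mem_toFinset] at hu
  obtain ⟨max_mem, le_max⟩ := isGreatest_listMax (List.ne_nil_of_mem hu)
  rw [mem_wreachFinset, two_mul]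
  exact mem_wreach_add_of_le (mem_wreach_of_mem_firstSeq max_mem) (mem_wreach_of_mem_firstSeq hu)
    (le_max hu)

end FirstSequences

/-- The sequences `paddedSort F i m` with `m ∈ M`, `1 ≤ i ≤ k` and `F ⊆ wreach G (2 * r) m`: a
finite set containing every first sequence of length between `1` and `k` whose maximum lies
in `M`. -/
noncomputable def firstSeqCandidates [Fintype V] [LinearOrder V] (G : SimpleGraph V) (r k : ℕ)
    (M : Finset V) : Finset (List V) :=
  (M ×ˢ Finset.Icc 1 k).biUnion fun (m, i) =>
    (wreachFinset G (2 * r) m).powerset.image fun F => paddedSort F i m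

theorem firstSeq_mem_firstSeqCandidates [Fintype V] [LinearOrder V] [Nonempty V]
    {G : SimpleGraph V} {r k i : ℕ} {v : V} {M : Finset V} (hi : i ∈ Finset.Icc 1 k)
    (hM : listMax (firstSeq G r i v) ∈ M) : firstSeq G r i v ∈ firstSeqCandidates G r k M :=
  Finset.mem_biUnion.mpr ⟨(_, i), Finset.mk_mem_product hM hi, Finset.mem_image.mpr
    ⟨_, Finset.mem_powerset.mpr (toFinset_firstSeq_subset_wreachFinset_listMax G r i v),
      paddedSort_toFinset_firstSeq_listMax G r i v⟩⟩

theorem card_firstSeqCandidates_le [Fintype V] [LinearOrder V] (G : SimpleGraph V) (r k : ℕ)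
    (M : Finset V) :
    (firstSeqCandidates G r k M).card ≤ M.card * k * 2 ^ wcol G (2 * r) := by
  have card_pairs : (M ×ˢ Finset.Icc 1 k).card = M.card * k := by
    rw [Finset.card_product, Nat.card_Icc, Nat.add_sub_cancel]
  rw [← card_pairs]
  refine Finset.card_biUnion_le_card_mul _ _ _ fun (m, i) _ => Finset.card_image_le.trans ?_
  rw [Finset.card_powerset]
  exact Nat.pow_le_pow_right two_pos (card_wreachFinset_le_wcol G (2 * r) m)

theorem statement11_general [Fintype V] [LinearOrder V] [Nonempty V] (G : SimpleGraph V)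
    (r k : ℕ) (Y : List V) :
    {X : List V | (∃ v : V, ∃ i : ℕ, i ≤ k ∧ X = firstSeq G r i v) ∧ X ≠ Y ∧
      (X = [] ∨ listMax X ∈ Y)}.ncard ≤ 1 + Y.length * k * 2 ^ wcol G (2 * r) := by
  have subset_candidates : {X : List V | (∃ v : V, ∃ i : ℕ, i ≤ k ∧ X = firstSeq G r i v) ∧ X ≠ Y ∧
      (X = [] ∨ listMax X ∈ Y)} ⊆ ↑(insert [] (firstSeqCandidates G r k Y.toFinset)) := by
    rintro _ ⟨⟨v, i, hi, rfl⟩, -, hX⟩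
    rw [Finset.mem_coe, Finset.mem_insert]
    refine or_iff_not_imp_left.mpr fun ne_nil => ?_
    have i_pos : 1 ≤ i := by
      simpa only [length_firstSeq] using Nat.succ_le_of_lt (List.length_pos_of_ne_nil ne_nil)
    exact firstSeq_mem_firstSeqCandidates (Finset.mem_Icc.mpr ⟨i_pos, hi⟩)
      (List.mem_toFinset.mpr (hX.resolve_left ne_nil))
  calc
    _ ≤ (insert [] (firstSeqCandidates G r k Y.toFinset)).card :=
      (Set.ncard_le_ncard subset_candidates (Finset.finite_toSet _)).trans_eq
        (Set.ncard_coe_finset _)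
    _ ≤ 1 + (firstSeqCandidates G r k Y.toFinset).card :=
      (Finset.card_insert_le _ _).trans_eq (add_comm _ _)
    _ ≤ 1 + Y.toFinset.card * k * 2 ^ wcol G (2 * r) := by
      gcongr
      exact card_firstSeqCandidates_le G r k Y.toFinset
    _ ≤ 1 + Y.length * k * 2 ^ wcol G (2 * r) := by
      gcongr
      exact List.toFinset_card_le Y

theorem statement11 [Fintype V] [LinearOrder V] [Nonempty V] (G : SimpleGraph V) (r : ℕ)
    (d : ℕ) (hd : wcol G (2 * r) ≤ d)
    (Y : List V) (hY : ∃ v : V, ∃ i : ℕ, i ≤ d ∧ Y = firstSeq G r i v) :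
    -- the out-neighborhood of `Y` in the directed graph `D`
    {X : List V | (∃ v : V, ∃ i : ℕ, i ≤ d ∧ X = firstSeq G r i v) ∧ X ≠ Y ∧
      (X = [] ∨ listMax X ∈ Y)}.ncard ≤ 1 + d ^ 2 * 2 ^ d := by
  obtain ⟨v, i, hi, rfl⟩ := hY
  have length_le : (firstSeq G r i v).length ≤ d := (length_firstSeq G r i v).trans_le hi
  exact (statement11_general G r d _).trans (by rw [sq]; gcongr; exact one_le_two)
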